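/- Let q be a complex number with |q| < 1 and let a, b, c, d, f be complex numbers with max{|a|,|b|,|c|,|d|,|f|} < 1. Then ∫₀^π h(cos θ; 1, -1, q^{1/2}, -q^{1/2}) / h(cos θ; a, b, c, d, f) dθ = [2π (abcd; q)_∞ (abcf; q)_∞ / ((q; q)_∞ (ab; q)_∞ (ac; q)_∞ (ad; q)_∞ (af; q)_∞ (bc; q)_∞ (bd; q)_∞ (bf; q)_∞ (cd; q)_∞ (cf; q)_∞)] · Σ_{k=0}^∞ [(ab; q)_k (ac; q)_k (bc; q)_k / ((q; q)_k (abcd; q)_k (abcf; q)_k)] (df)^k. (The Ismail–Stanton–Viennot integral.) -/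

import Mathlib

open Complex MeasureTheory

/-- The q-shifted factorial `(x; q)_∞ = ∏_{k=0}^∞ (1 - x q^k)`. -/
noncomputable def qp (q x : ℂ) : ℂ := ∏' k : ℕ, (1 - x * q ^ k)

/-- The finite q-shifted factorial `(x; q)_n = ∏_{k=0}^{n-1} (1 - x q^k)`. -/
noncomputable def qpn (q x : ℂ) (n : ℕ) : ℂ := ∏ k ∈ Finset.range n, (1 - x * q ^ k)

/-- For `x = cos θ`, `h(x; λ) = (λ e^{iθ}; q)_∞ (λ e^{-iθ}; q)_∞`. -/
noncomputable def hh (q : ℂ) (θ : ℝ) (l : ℂ) : ℂ :=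
  qp q (l * Complex.exp ((θ : ℂ) * Complex.I)) *
    qp q (l * Complex.exp (-((θ : ℂ) * Complex.I)))

open Filter Topology

lemma isv_summ {q : ℂ} (hq : ‖q‖ < 1) (x : ℂ) : Summable fun k : ℕ => ‖-(x * q ^ k)‖ := by
  simp only [norm_neg, norm_mul, norm_pow]
  exact (summable_geometric_of_lt_one (norm_nonneg _) hq).mul_left _

lemma isv_mult {q : ℂ} (hq : ‖q‖ < 1) (x : ℂ) : Multipliable fun k : ℕ => (1 - x * q ^ k) := by
  simpa only [sub_eq_add_neg] using multipliable_one_add_of_summable (isv_summ hq x)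

lemma qp_zero (q : ℂ) : qp q 0 = 1 := by simp [qp]

lemma qp_split {q : ℂ} (hq : ‖q‖ < 1) (x : ℂ) (n : ℕ) :
    qp q x = qpn q x n * qp q (x * q ^ n) := by
  have e : ∀ k : ℕ, 1 - x * q ^ n * q ^ k = 1 - x * q ^ (k + n) := fun k => by
    rw [pow_add]; ring
  have h : Multipliable (fun k : ℕ => 1 - x * q ^ (k + n)) := by
    have := isv_mult hq (x * q ^ n)
    simpa only [e] using this
  have h2 := Multipliable.prod_mul_tprod_nat_mul' (f := fun j : ℕ => 1 - x * q ^ j) h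
  have h3 : qp q (x * q ^ n) = ∏' k : ℕ, (1 - x * q ^ (k + n)) := tprod_congr e
  rw [h3]
  exact h2.symm

lemma qp_shift {q : ℂ} (hq : ‖q‖ < 1) (x : ℂ) : qp q x = (1 - x) * qp q (x * q) := by
  have := qp_split hq x 1
  simpa [qpn] using this

lemma isv_lt {q x : ℂ} (hq : ‖q‖ < 1) (hx : ‖x‖ < 1) (k : ℕ) : ‖x * q ^ k‖ < 1 := by
  rw [norm_mul, norm_pow]
  calc ‖x‖ * ‖q‖ ^ k ≤ ‖x‖ * 1 := by
        gcongr; exact pow_le_one₀ (norm_nonneg _) hq.le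
    _ < 1 := by simpa

lemma isv_one_sub {x : ℂ} (hx : ‖x‖ < 1) : 1 - x ≠ 0 := by
  intro h
  have : x = 1 := (sub_eq_zero.mp h).symm
  rw [this] at hx; simp at hx

lemma qp_ne {q x : ℂ} (hq : ‖q‖ < 1) (hx : ‖x‖ < 1) : qp q x ≠ 0 := by
  have := tprod_one_add_ne_zero_of_summable (f := fun k : ℕ => -(x * q ^ k)) (fun k => by
    rw [← sub_eq_add_neg]; exact isv_one_sub (isv_lt hq hx k)) (isv_summ hq x)
  simpa only [qp, sub_eq_add_neg] using this

lemma qpn_ne {q x : ℂ} (hq : ‖q‖ < 1) (hx : ‖x‖ < 1) (n : ℕ) : qpn q x n ≠ 0 := by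
  rw [qpn, Finset.prod_ne_zero_iff]
  intro k _
  exact isv_one_sub (isv_lt hq hx k)

lemma qpn_succ (q x : ℂ) (n : ℕ) : qpn q x (n + 1) = qpn q x n * (1 - x * q ^ n) := by
  simp [qpn, Finset.prod_range_succ]

lemma qpn_tendsto {q : ℂ} (hq : ‖q‖ < 1) (x : ℂ) :
    Tendsto (qpn q x) atTop (𝓝 (qp q x)) := (isv_mult hq x).hasProd.tendsto_prod_nat

lemma qp_differentiable {q : ℂ} (hq : ‖q‖ < 1) : Differentiable ℂ (qp q) := by
  intro x
  have hK : IsOpen (Metric.ball (0 : ℂ) (‖x‖ + 1)) := Metric.isOpen_ball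
  have h := Summable.hasProdLocallyUniformlyOn_nat_one_add (f := fun (k : ℕ) (x : ℂ) => -(x * q ^ k)) hK
    (u := fun k => (‖x‖ + 1) * ‖q‖ ^ k)
    ((summable_geometric_of_lt_one (norm_nonneg _) hq).mul_left _)
    (Eventually.of_forall fun n y hy => by
      simp only [norm_neg, norm_mul, norm_pow]
      gcongr
      simpa using (Metric.mem_ball.mp hy).le)
    (fun n => by fun_prop)
  have h2 := h.tendstoLocallyUniformlyOn_finsetRange.differentiableOn
    (Eventually.of_forall fun s => by fun_prop) hK
  have h3 := h2.differentiableAt (hK.mem_nhds (by simp : x ∈ Metric.ball (0 : ℂ) (‖x‖ + 1)))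
  simp only [← sub_eq_add_neg] at h3
  exact h3

lemma isv_sq {q : ℂ} (hq : ‖q‖ < 1) : ‖q ^ 2‖ < 1 := by
  rw [norm_pow]; exact pow_lt_one₀ (norm_nonneg _) hq (by norm_num)

lemma qp_neg_mul {q : ℂ} (hq : ‖q‖ < 1) (x : ℂ) : qp q x * qp q (-x) = qp (q ^ 2) (x ^ 2) := by
  rw [qp, qp, qp, ← (isv_mult hq x).tprod_mul (isv_mult hq (-x))]
  apply tprod_congr
  intro k; ring

lemma qp_even_odd {q : ℂ} (hq : ‖q‖ < 1) (x : ℂ) :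
    qp (q ^ 2) x * qp (q ^ 2) (x * q) = qp q x := by
  have h1 := isv_mult (isv_sq hq) x
  have h2 := isv_mult (isv_sq hq) (x * q)
  have := tprod_even_mul_odd (f := fun k : ℕ => 1 - x * q ^ k)
    (h1.congr fun k => by rw [pow_mul])
    (h2.congr fun k => by rw [pow_succ q (2 * k), pow_mul]; ring)
  rw [qp, qp, qp, ← this]
  congr 1
  · apply tprod_congr; intro k; rw [pow_mul]
  · apply tprod_congr; intro k; rw [pow_succ q (2 * k), pow_mul]; ring

lemma isv_unique {q : ℂ} (hq : ‖q‖ < 1) (E : ℂ → ℂ → ℂ)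
    (hE : ∀ d, ‖d‖ < 1 → DifferentiableOn ℂ (fun c => E c d) (Metric.ball 0 1))
    (h0 : ∀ d, ‖d‖ < 1 → E 0 d = 0) (h0' : ∀ c, ‖c‖ < 1 → E c 0 = 0)
    (heq : ∀ c d, ‖c‖ < 1 → ‖d‖ < 1 →
      d * E (c * q) d - c * E c (d * q) = (d - c) * (1 - c * d) * E c d) :
    ∀ c d, ‖c‖ < 1 → ‖d‖ < 1 → E c d = 0 := by
  have hmem : Metric.ball (0 : ℂ) 1 ∈ 𝓝 (0 : ℂ) := Metric.ball_mem_nhds _ one_pos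
  have key : ∀ m : ℕ, ∀ d, ‖d‖ < 1 → ∃ g : ℂ → ℂ, AnalyticAt ℂ g 0 ∧
      ∀ᶠ c in 𝓝 0, E c d = c ^ m * g c := by
    intro m
    induction m with
    | zero =>
      intro d hd
      exact ⟨fun c => E c d, (hE d hd).analyticAt hmem, by simp⟩
    | succ m ih =>
      intro d hd
      by_cases hd0 : d = 0
      · refine ⟨fun _ => 0, analyticAt_const, ?_⟩
        filter_upwards [hmem] with c hc
        rw [hd0, h0' c (by simpa using hc)]; simp
      obtain ⟨g, hg, hgE⟩ := ih d hd
      have hdq : ‖d * q‖ < 1 := by simpa using isv_lt hq hd 1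
      obtain ⟨g2, hg2, hgE2⟩ := ih (d * q) hdq
      have hg0 : g 0 = 0 := by
        rcases Nat.eq_zero_or_pos m with hm | hm
        · subst hm
          have := hgE.self_of_nhds
          simpa [h0 d hd] using this.symm
        have hqc : Tendsto (fun c : ℂ => c * q) (𝓝 0) (𝓝 0) := by
          have : Continuous (fun c : ℂ => c * q) := by fun_prop
          simpa using this.tendsto 0
        have e1 : ∀ᶠ c in 𝓝[≠] (0 : ℂ), d * (q ^ m * g (c * q)) - c * g2 c
            = (d - c) * (1 - c * d) * g c := by
          have A : ∀ᶠ c in 𝓝 (0 : ℂ), c ^ m * (d * (q ^ m * g (c * q)) - c * g2 c)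
            = c ^ m * ((d - c) * (1 - c * d) * g c) := by
            filter_upwards [hgE, hgE2, hqc.eventually hgE, hmem] with c h1 h2 h3 h4
            have := heq c d (by simpa using h4) hd
            rw [h1, h2, h3] at this
            linear_combination this
          filter_upwards [A.filter_mono nhdsWithin_le_nhds, self_mem_nhdsWithin] with c h1 h2
          exact mul_left_cancel₀ (pow_ne_zero m h2) h1
        have cg : ContinuousAt g 0 := hg.continuousAt
        have cg2 : ContinuousAt g2 0 := hg2.continuousAt
        have l1 : Tendsto (fun c => d * (q ^ m * g (c * q)) - c * g2 c) (𝓝 0)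
            (𝓝 (d * (q ^ m * g 0) - 0 * g2 0)) := by
          refine Tendsto.sub ?_ (tendsto_id.mul cg2)
          exact ((cg.tendsto.comp hqc).const_mul _).const_mul _
        have l2 : Tendsto (fun c => (d - c) * (1 - c * d) * g c) (𝓝 0)
            (𝓝 ((d - 0) * (1 - 0 * d) * g 0)) := by
          refine Tendsto.mul ?_ cg
          have : Continuous (fun c : ℂ => (d - c) * (1 - c * d)) := by fun_prop
          exact this.tendsto 0
        have l3 := tendsto_nhds_unique
          ((l1.mono_left nhdsWithin_le_nhds).congr' e1) (l2.mono_left nhdsWithin_le_nhds)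
        have l4 : d * ((q ^ m - 1) * g 0) = 0 := by linear_combination l3
        have hqm : q ^ m - 1 ≠ 0 := by
          have : ‖q ^ m‖ < 1 := by
            rw [norm_pow]; exact pow_lt_one₀ (norm_nonneg _) hq hm.ne'
          have := isv_one_sub this
          intro h; apply this; linear_combination -h
        simpa [hd0, hqm] using l4
      have hord : ((1 : ℕ) : ℕ∞) ≤ analyticOrderAt g 0 := by
        rw [Nat.cast_one, Order.one_le_iff_ne_zero]
        rw [hg.analyticOrderAt_ne_zero]; exact hg0
      obtain ⟨k, hk, hk2⟩ := (natCast_le_analyticOrderAt hg).mp hord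
      refine ⟨k, hk, ?_⟩
      filter_upwards [hgE, hk2] with c h1 h2
      rw [h1, h2]; simp; ring
  intro c d hc hd
  have han : AnalyticOnNhd ℂ (fun c => E c d) (Metric.ball 0 1) :=
    (hE d hd).analyticOnNhd Metric.isOpen_ball
  have htop : analyticOrderAt (fun c => E c d) 0 = ⊤ := by
    rw [ENat.eq_top_iff_forall_ge]
    intro m
    rw [natCast_le_analyticOrderAt (han 0 (by simp))]
    obtain ⟨g, h1, h2⟩ := key m d hd
    exact ⟨g, h1, by simpa using h2⟩
  rw [analyticOrderAt_eq_top] at htop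
  exact han.eqOn_zero_of_preconnected_of_eventuallyEq_zero
    (convex_ball (0 : ℂ) 1).isPreconnected (by simp : (0 : ℂ) ∈ Metric.ball (0 : ℂ) 1) htop
    (by simpa using hc)


lemma isv_ne1 (θ : ℝ) : ‖Complex.exp ((θ : ℂ) * I)‖ = 1 := Complex.norm_exp_ofReal_mul_I θ

lemma isv_ne2 (θ : ℝ) : ‖Complex.exp (-((θ : ℂ) * I))‖ = 1 := by
  have := Complex.norm_exp_ofReal_mul_I (-θ)
  simpa using this

lemma isv_exp_mul (θ : ℝ) : Complex.exp ((θ : ℂ) * I) * Complex.exp (-((θ : ℂ) * I)) = 1 := by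
  rw [← Complex.exp_add]; simp

lemma hh_zero (q : ℂ) (θ : ℝ) : hh q θ 0 = 1 := by simp [hh, qp_zero]

lemma hh_shift {q : ℂ} (hq : ‖q‖ < 1) (θ : ℝ) (c : ℂ) :
    hh q θ c = (1 - c * (Complex.exp ((θ : ℂ) * I) + Complex.exp (-((θ : ℂ) * I))) + c ^ 2)
      * hh q θ (c * q) := by
  have h := isv_exp_mul θ
  rw [hh, hh, qp_shift hq (c * Complex.exp ((θ : ℂ) * I)),
    qp_shift hq (c * Complex.exp (-((θ : ℂ) * I))),
    mul_right_comm c _ q, mul_right_comm c _ q]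
  linear_combination (c ^ 2 * qp q (c * q * Complex.exp ((θ : ℂ) * I)) *
    qp q (c * q * Complex.exp (-((θ : ℂ) * I)))) * h

lemma hh_ne {q c : ℂ} (hq : ‖q‖ < 1) (hc : ‖c‖ < 1) (θ : ℝ) : hh q θ c ≠ 0 := by
  refine mul_ne_zero (qp_ne hq ?_) (qp_ne hq ?_)
  · rwa [norm_mul, isv_ne1, mul_one]
  · rwa [norm_mul, isv_ne2, mul_one]

lemma hh_cont {q : ℂ} (hq : ‖q‖ < 1) (c : ℂ) : Continuous (fun θ : ℝ => hh q θ c) := by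
  have := (qp_differentiable hq).continuous
  unfold hh
  fun_prop

lemma isv_contig {q : ℂ} (hq : ‖q‖ < 1) (W : ℝ → ℂ) (hW : Continuous W) (c d : ℂ)
    (hc : ‖c‖ < 1) (hd : ‖d‖ < 1) :
    d * (∫ θ in (0:ℝ)..Real.pi, W θ / (hh q θ (c * q) * hh q θ d))
      - c * (∫ θ in (0:ℝ)..Real.pi, W θ / (hh q θ c * hh q θ (d * q)))
      = (d - c) * (1 - c * d) * ∫ θ in (0:ℝ)..Real.pi, W θ / (hh q θ c * hh q θ d) := by
  have hcq : ‖c * q‖ < 1 := by simpa using isv_lt hq hc 1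
  have hdq : ‖d * q‖ < 1 := by simpa using isv_lt hq hd 1
  have cont : ∀ x y : ℂ, ‖x‖ < 1 → ‖y‖ < 1 →
      Continuous (fun θ : ℝ => W θ / (hh q θ x * hh q θ y)) := fun x y hx hy =>
    hW.div ((hh_cont hq x).mul (hh_cont hq y)) fun θ => mul_ne_zero (hh_ne hq hx θ) (hh_ne hq hy θ)
  rw [← intervalIntegral.integral_const_mul, ← intervalIntegral.integral_const_mul,
    ← intervalIntegral.integral_const_mul, ← intervalIntegral.integral_sub]
  · apply intervalIntegral.integral_congr
    intro θ _
    simp only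
    have h1 := hh_shift hq θ c
    have h2 := hh_shift hq θ d
    have n1 := hh_ne hq hc θ
    have n2 := hh_ne hq hd θ
    have n3 := hh_ne hq hcq θ
    have n4 := hh_ne hq hdq θ
    have m1 : 1 / hh q θ (c * q) = (1 - c * (Complex.exp ((θ : ℂ) * I)
        + Complex.exp (-((θ : ℂ) * I))) + c ^ 2) / hh q θ c := by
      rw [div_eq_div_iff n3 n1]; linear_combination h1
    have m2 : 1 / hh q θ (d * q) = (1 - d * (Complex.exp ((θ : ℂ) * I)
        + Complex.exp (-((θ : ℂ) * I))) + d ^ 2) / hh q θ d := by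
      rw [div_eq_div_iff n4 n2]; linear_combination h2
    have a1 : W θ / (hh q θ (c * q) * hh q θ d) = W θ / hh q θ d * (1 / hh q θ (c * q)) := by
      field_simp
    have a2 : W θ / (hh q θ c * hh q θ (d * q)) = W θ / hh q θ c * (1 / hh q θ (d * q)) := by
      field_simp
    rw [a1, a2, m1, m2]
    field_simp
    ring
  · exact (continuous_const.mul (cont _ _ hcq hd)).intervalIntegrable _ _
  · exact (continuous_const.mul (cont _ _ hc hdq)).intervalIntegrable _ _

lemma isv_phi_diff {q : ℂ} (hq : ‖q‖ < 1) :
    DifferentiableOn ℂ (fun x => (qp q x)⁻¹) (Metric.ball 0 1) := by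
  apply (qp_differentiable hq).differentiableOn.inv
  intro x hx
  exact qp_ne hq (by simpa using hx)

lemma isv_int_diff {q : ℂ} (hq : ‖q‖ < 1) (V : ℝ → ℂ) (hV : Continuous V) :
    DifferentiableOn ℂ (fun c => ∫ θ in (0:ℝ)..Real.pi, V θ / hh q θ c) (Metric.ball 0 1) := by
  intro c₀ hc₀
  apply DifferentiableAt.differentiableWithinAt
  have hc₀' : ‖c₀‖ < 1 := by simpa using hc₀
  obtain ⟨r, hr1, hr2⟩ := exists_between hc₀'
  set φ : ℂ → ℂ := fun x => (qp q x)⁻¹ with hφ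
  have hd : DifferentiableOn ℂ φ (Metric.ball 0 1) := isv_phi_diff hq
  have hd' : ContinuousOn (deriv φ) (Metric.ball 0 1) :=
    (hd.deriv Metric.isOpen_ball).continuousOn
  have hsub : Metric.closedBall (0 : ℂ) r ⊆ Metric.ball 0 1 := Metric.closedBall_subset_ball hr2
  obtain ⟨M1, hM1⟩ := (isCompact_closedBall (0 : ℂ) r).exists_bound_of_continuousOn
    (hd.continuousOn.mono hsub)
  obtain ⟨M2, hM2⟩ := (isCompact_closedBall (0 : ℂ) r).exists_bound_of_continuousOn
    (hd'.mono hsub)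
  have eF : ∀ c, ∀ θ : ℝ, V θ / hh q θ c = V θ * (φ (c * Complex.exp ((θ : ℂ) * I)) *
      φ (c * Complex.exp (-((θ : ℂ) * I)))) := by
    intro c θ
    simp only [hφ, hh]
    rw [div_eq_mul_inv, mul_inv]
  simp only [eF]
  have hrpos : 0 ≤ r := (norm_nonneg _).trans hr1.le
  have cont1 : ∀ ψ : ℂ → ℂ, ContinuousOn ψ (Metric.ball 0 1) → ∀ c : ℂ, ‖c‖ < 1 →
      Continuous (fun θ : ℝ => ψ (c * Complex.exp ((θ : ℂ) * I))) := by
    intro ψ hψ c hc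
    refine hψ.comp_continuous (by fun_prop) fun θ => ?_
    simp [hc]
  have cont2 : ∀ ψ : ℂ → ℂ, ContinuousOn ψ (Metric.ball 0 1) → ∀ c : ℂ, ‖c‖ < 1 →
      Continuous (fun θ : ℝ => ψ (c * Complex.exp (-((θ : ℂ) * I)))) := by
    intro ψ hψ c hc
    refine hψ.comp_continuous (by fun_prop) fun θ => ?_
    rw [mem_ball_zero_iff, norm_mul, isv_ne2, mul_one]; exact hc
  have contF : ∀ c : ℂ, ‖c‖ < 1 → Continuous (fun θ : ℝ => V θ *
      (φ (c * Complex.exp ((θ : ℂ) * I)) * φ (c * Complex.exp (-((θ : ℂ) * I))))) := fun c hc =>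
    hV.mul ((cont1 _ hd.continuousOn c hc).mul (cont2 _ hd.continuousOn c hc))
  have contF' : Continuous (fun θ : ℝ => V θ *
      ((deriv φ (c₀ * Complex.exp ((θ : ℂ) * I)) * Complex.exp ((θ : ℂ) * I)) *
          φ (c₀ * Complex.exp (-((θ : ℂ) * I))) +
        φ (c₀ * Complex.exp ((θ : ℂ) * I)) *
          (deriv φ (c₀ * Complex.exp (-((θ : ℂ) * I))) * Complex.exp (-((θ : ℂ) * I))))) := by
    have a1 := cont1 _ hd.continuousOn c₀ hc₀'
    have a2 := cont2 _ hd.continuousOn c₀ hc₀'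
    have a3 := cont1 _ hd' c₀ hc₀'
    have a4 := cont2 _ hd' c₀ hc₀'
    have b1 : Continuous (fun θ : ℝ => Complex.exp ((θ : ℂ) * I)) := by fun_prop
    have b2 : Continuous (fun θ : ℝ => Complex.exp (-((θ : ℂ) * I))) := by fun_prop
    exact hV.mul (((a3.mul b1).mul a2).add (a1.mul (a4.mul b2)))
  refine (intervalIntegral.hasDerivAt_integral_of_dominated_loc_of_deriv_le (𝕜 := ℂ)
    (F' := fun c (θ : ℝ) => V θ *
      ((deriv φ (c * Complex.exp ((θ : ℂ) * I)) * Complex.exp ((θ : ℂ) * I)) *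
          φ (c * Complex.exp (-((θ : ℂ) * I))) +
        φ (c * Complex.exp ((θ : ℂ) * I)) *
          (deriv φ (c * Complex.exp (-((θ : ℂ) * I))) * Complex.exp (-((θ : ℂ) * I)))))
    (s := Metric.ball 0 r) (bound := fun θ => ‖V θ‖ * (M2 * M1 + M1 * M2))
    (Metric.isOpen_ball.mem_nhds (by simpa using hr1)) ?_ ?_ ?_ ?_ ?_ ?_).2.differentiableAt
  · filter_upwards [Metric.isOpen_ball.mem_nhds hc₀] with c hc
    exact (contF c (by simpa using hc)).aestronglyMeasurable
  · exact (contF c₀ hc₀').intervalIntegrable _ _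
  · exact contF'.aestronglyMeasurable
  · refine Eventually.of_forall fun θ _ c hc => ?_
    have hc' : ‖c‖ ≤ r := by simpa using (Metric.mem_ball.mp hc).le
    have m1 : c * Complex.exp ((θ : ℂ) * I) ∈ Metric.closedBall (0 : ℂ) r := by
      rw [mem_closedBall_zero_iff, norm_mul, isv_ne1, mul_one]; exact hc'
    have m2 : c * Complex.exp (-((θ : ℂ) * I)) ∈ Metric.closedBall (0 : ℂ) r := by
      rw [mem_closedBall_zero_iff, norm_mul, isv_ne2, mul_one]; exact hc'
    have M1p : 0 ≤ M1 := (norm_nonneg _).trans (hM1 _ m1)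
    have M2p : 0 ≤ M2 := (norm_nonneg _).trans (hM2 _ m1)
    rw [norm_mul]
    refine mul_le_mul_of_nonneg_left ((norm_add_le _ _).trans ?_) (norm_nonneg _)
    simp only [norm_mul, isv_ne1, isv_ne2, mul_one]
    exact add_le_add (mul_le_mul (hM2 _ m1) (hM1 _ m2) (norm_nonneg _) M2p)
      (mul_le_mul (hM1 _ m1) (hM2 _ m2) (norm_nonneg _) M1p)
  · exact (hV.norm.mul continuous_const).intervalIntegrable _ _
  · refine Eventually.of_forall fun θ _ c hc => ?_
    have hc' : ‖c‖ < 1 := by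
      have := Metric.mem_ball.mp hc
      rw [dist_zero_right] at this; linarith
    have dd : ∀ x : ℂ, ‖x‖ < 1 → HasDerivAt φ (deriv φ x) x := fun x hx =>
      (hd.differentiableAt (Metric.isOpen_ball.mem_nhds (by simpa using hx))).hasDerivAt
    have lin : ∀ e : ℂ, HasDerivAt (fun c : ℂ => c * e) e c := fun e => by
      simpa using (hasDerivAt_id c).mul_const e
    have h1 := HasDerivAt.comp c (dd (c * Complex.exp ((θ : ℂ) * I))
      (by rw [norm_mul, isv_ne1, mul_one]; exact hc')) (lin _)
    have h2 := HasDerivAt.comp c (dd (c * Complex.exp (-((θ : ℂ) * I)))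
      (by rw [norm_mul, isv_ne2, mul_one]; exact hc')) (lin _)
    exact (h1.mul h2).const_mul (V θ)


lemma isv_circ (F : ℂ → ℂ) (R : ℝ) (hR : R ≠ 0) :
    (∮ z in C(0, R), (z - 0)⁻¹ • F z) = I * ∫ θ in (0:ℝ)..2 * Real.pi,
      F (R * Complex.exp ((θ : ℂ) * I)) := by
  rw [circleIntegral, ← intervalIntegral.integral_const_mul]
  apply intervalIntegral.integral_congr
  intro θ _
  simp only [deriv_circleMap, sub_zero, smul_eq_mul]
  have : circleMap 0 R θ ≠ 0 := circleMap_ne_center hR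
  have e : circleMap 0 R θ = R * Complex.exp ((θ : ℂ) * I) := by simp [circleMap]
  rw [← e]
  field_simp

lemma isv_mean (F : ℂ → ℂ) (u : ℂ) (hu0 : u ≠ 0) (hu1 : ‖u‖ ≤ 1)
    (hF : ∀ z, ‖u‖ ≤ ‖z‖ → ‖z‖ ≤ 1 → DifferentiableAt ℂ F z) :
    ∫ θ in (0:ℝ)..2 * Real.pi, F (u * Complex.exp ((θ : ℂ) * I)) =
      ∫ θ in (0:ℝ)..2 * Real.pi, F (Complex.exp ((θ : ℂ) * I)) := by
  have hpos : 0 < ‖u‖ := norm_pos_iff.mpr hu0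
  have h := circleIntegral_sub_center_inv_smul_eq_of_differentiable_on_annulus_off_countable
    (c := 0) hpos hu1 (f := F) Set.countable_empty
    (fun z hz => by
      have h1 := hz.1
      have h2 := hz.2
      simp only [mem_closedBall_zero_iff, mem_ball_zero_iff, not_lt] at h1 h2
      exact (hF z h2 h1).continuousAt.continuousWithinAt)
    (fun z hz => by
      have h1 := hz.1.1
      have h2 := hz.1.2
      simp only [mem_closedBall_zero_iff, mem_ball_zero_iff, not_le] at h1 h2
      exact hF z h2.le h1.le)
  rw [isv_circ F 1 one_ne_zero, isv_circ F ‖u‖ hpos.ne'] at h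
  have h' := mul_left_cancel₀ I_ne_zero h
  simp only [ofReal_one, one_mul] at h'
  rw [h']
  have e : ∀ θ : ℝ, F (u * Complex.exp ((θ : ℂ) * I)) =
      (fun t : ℝ => F (‖u‖ * Complex.exp ((t : ℂ) * I))) (θ + Complex.arg u) := by
    intro θ
    simp only
    congr 1
    conv_lhs => rw [← Complex.norm_mul_exp_arg_mul_I u]
    rw [mul_assoc, ← Complex.exp_add]
    congr 2
    push_cast; ring
  simp only [e]
  rw [intervalIntegral.integral_comp_add_right
    (fun t : ℝ => F (‖u‖ * Complex.exp ((t : ℂ) * I))) (Complex.arg u)]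
  have per : Function.Periodic (fun t : ℝ => F (‖u‖ * Complex.exp ((t : ℂ) * I)))
      (2 * Real.pi) := by
    intro t
    simp only
    congr 2
    push_cast
    rw [add_mul, Complex.exp_add, Complex.exp_two_pi_mul_I, mul_one]
  have := per.intervalIntegral_add_eq (Complex.arg u) 0
  rw [zero_add] at this ⊢
  rw [← this, add_comm (Complex.arg u)]

lemma isv_fold (g : ℂ → ℂ) (hg : Continuous fun θ : ℝ => g (Complex.exp ((θ : ℂ) * I))) :
    ∫ θ in (0:ℝ)..2 * Real.pi, g (Complex.exp ((θ : ℂ) * I)) =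
      ∫ θ in (0:ℝ)..Real.pi, (g (Complex.exp ((θ : ℂ) * I)) +
        g (Complex.exp (-((θ : ℂ) * I)))) := by
  have per : Function.Periodic (fun t : ℝ => g (Complex.exp ((t : ℂ) * I))) (2 * Real.pi) := by
    intro t
    simp only
    congr 1
    push_cast
    rw [add_mul, Complex.exp_add, Complex.exp_two_pi_mul_I, mul_one]
  have h1 := per.intervalIntegral_add_eq 0 (-Real.pi)
  rw [zero_add, show -Real.pi + 2 * Real.pi = Real.pi by ring] at h1
  rw [h1, ← intervalIntegral.integral_add_adjacent_intervals (b := 0)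
    (hg.intervalIntegrable _ _) (hg.intervalIntegrable _ _)]
  have h2 := intervalIntegral.integral_comp_neg (a := 0) (b := Real.pi)
    (fun t : ℝ => g (Complex.exp ((t : ℂ) * I)))
  simp only [neg_zero, ofReal_neg, neg_mul] at h2
  rw [← h2, intervalIntegral.integral_add (hg.intervalIntegrable _ _), add_comm]
  have : Continuous fun θ : ℝ => g (Complex.exp (((-θ : ℝ) : ℂ) * I)) := hg.comp continuous_neg
  simp only [ofReal_neg, neg_mul] at this
  exact this.intervalIntegrable _ _

/-- the base kernel -/
noncomputable def isvg (q a z : ℂ) : ℂ :=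
  (z ^ 3)⁻¹ * qp q (z ^ 2) * qp q (q * (z ^ 2)⁻¹) / (qp q (a * q * z) * qp q (a * z⁻¹))

noncomputable def isvF (q u a z : ℂ) : ℂ :=
  z⁻¹ * qp q (z ^ 2) * qp q (q * (z ^ 2)⁻¹) / (qp q (a * u * z) * qp q (a * u * z⁻¹))

lemma isvF_diff {q u a : ℂ} (hq : ‖q‖ < 1) (hu0 : u ≠ 0) (ha : ‖a‖ < 1)
    (z : ℂ) (h1 : ‖u‖ ≤ ‖z‖) (h2 : ‖z‖ ≤ 1) : DifferentiableAt ℂ (isvF q u a) z := by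
  have hz : z ≠ 0 := by
    intro h; rw [h, norm_zero] at h1
    exact hu0 (norm_le_zero_iff.mp h1)
  have hu1 : ‖u‖ ≤ 1 := h1.trans h2
  have hz2 : z ^ 2 ≠ 0 := pow_ne_zero 2 hz
  have D := qp_differentiable hq
  have k1 : ‖a * u * z‖ < 1 := by
    rw [norm_mul, norm_mul]
    calc ‖a‖ * ‖u‖ * ‖z‖ ≤ ‖a‖ * 1 * 1 := by gcongr
      _ < 1 := by simpa
  have k2 : ‖a * u * z⁻¹‖ < 1 := by
    rw [norm_mul, norm_mul, norm_inv, mul_assoc]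
    have : ‖u‖ * ‖z‖⁻¹ ≤ 1 := by
      rw [← div_eq_mul_inv]; exact div_le_one_of_le₀ h1 (norm_nonneg _)
    calc ‖a‖ * (‖u‖ * ‖z‖⁻¹) ≤ ‖a‖ * 1 := by gcongr
      _ < 1 := by simpa
  have d1 : DifferentiableAt ℂ (fun z : ℂ => z⁻¹) z := differentiableAt_inv hz
  have d2 : DifferentiableAt ℂ (fun z : ℂ => (z ^ 2)⁻¹) z :=
    (differentiableAt_id.pow 2).inv hz2
  have c : ∀ f : ℂ → ℂ, DifferentiableAt ℂ f z → DifferentiableAt ℂ (fun z => qp q (f z)) z :=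
    fun f hf => (D (f z)).comp z hf
  unfold isvF
  refine DifferentiableAt.div ?_ ?_ (mul_ne_zero (qp_ne hq k1) (qp_ne hq k2))
  · exact (d1.mul (c _ (differentiableAt_id.pow 2))).mul (c _ (d2.const_mul q))
  · exact (c _ (differentiableAt_id.const_mul _)).mul (c _ (d1.const_mul _))

lemma isvF_anti {q u a : ℂ} (hq : ‖q‖ < 1) (z : ℂ) (hz : z ≠ 0) :
    isvF q u a z⁻¹ = - isvF q u a z := by
  unfold isvF
  have h1 := qp_shift hq (z ^ 2)
  have h2 := qp_shift hq ((z⁻¹) ^ 2)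
  have e2 : (((z⁻¹) ^ 2)⁻¹) = z ^ 2 := by simp
  rw [h1, h2, e2, inv_inv, mul_comm q (z ^ 2), inv_pow, mul_comm q ((z ^ 2)⁻¹),
    mul_comm (qp q (a * u * z⁻¹))]
  field_simp
  ring

lemma isvF_g {q u a : ℂ} (hq : ‖q‖ < 1) (hu : u ^ 2 = q) (hu0 : u ≠ 0) (z : ℂ) (hz : z ≠ 0) :
    isvg q a z = - u * isvF q u a (u * z) := by
  unfold isvF isvg
  have h1 := qp_shift hq (z ^ 2)
  have h2 := qp_shift hq ((z ^ 2)⁻¹)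
  have hq0 : q ≠ 0 := by rw [← hu]; exact pow_ne_zero 2 hu0
  have e1 : (u * z) ^ 2 = z ^ 2 * q := by rw [← hu]; ring
  have e2 : q * ((u * z) ^ 2)⁻¹ = (z ^ 2)⁻¹ := by
    rw [e1]; field_simp
  have e3 : a * u * (u * z) = a * q * z := by rw [← hu]; ring
  have e4 : a * u * (u * z)⁻¹ = a * z⁻¹ := by field_simp
  rw [e2, e3, e4, e1, h1, h2, mul_comm q ((z ^ 2)⁻¹)]
  field_simp
  ring

lemma isvg_sum {q a : ℂ} (hq : ‖q‖ < 1) (ha : ‖a‖ < 1) (z : ℂ) (hz : ‖z‖ = 1) :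
    isvg q a z + isvg q a z⁻¹ = (a - z - z⁻¹) * (qp q (z ^ 2) * qp q ((z⁻¹) ^ 2)) /
      (qp q (a * z) * qp q (a * z⁻¹)) := by
  have hz0 : z ≠ 0 := by intro h; rw [h] at hz; simp at hz
  have k1 : ‖a * z‖ < 1 := by rw [norm_mul, hz]; simpa
  have k2 : ‖a * z⁻¹‖ < 1 := by rw [norm_mul, norm_inv, hz]; simpa
  have n1 := isv_one_sub k1
  have n2 := isv_one_sub k2
  have m1 := qp_ne hq (by simpa using isv_lt hq k1 1 : ‖a * z * q‖ < 1)
  have m2 := qp_ne hq (by simpa using isv_lt hq k2 1 : ‖a * z⁻¹ * q‖ < 1)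
  unfold isvg
  simp only [inv_pow, inv_inv]
  rw [mul_comm q ((z ^ 2)⁻¹), mul_comm q (z ^ 2),
    qp_shift hq (z ^ 2), qp_shift hq ((z ^ 2)⁻¹), qp_shift hq (a * z), qp_shift hq (a * z⁻¹),
    mul_right_comm a q z, mul_right_comm a q z⁻¹]
  generalize qp q (a * z * q) = A at *
  generalize qp q (a * z⁻¹ * q) = B at *
  have n1' : 1 - z * a ≠ 0 := by rwa [mul_comm]
  have n2' : z - a ≠ 0 := by
    intro h; apply n2
    rw [← sub_eq_zero.mp h]; field_simp; simp
  field_simp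
  ring

lemma isvg_cont {q a : ℂ} (hq : ‖q‖ < 1) (ha : ‖a‖ < 1) :
    Continuous fun θ : ℝ => isvg q a (Complex.exp ((θ : ℂ) * I)) := by
  have D := (qp_differentiable hq).continuous
  unfold isvg
  have b1 : Continuous (fun θ : ℝ => Complex.exp ((θ : ℂ) * I)) := by fun_prop
  have i1 : Continuous (fun θ : ℝ => (Complex.exp ((θ : ℂ) * I))⁻¹) :=
    b1.inv₀ fun θ => Complex.exp_ne_zero _
  have i2 : Continuous (fun θ : ℝ => (Complex.exp ((θ : ℂ) * I) ^ 2)⁻¹) :=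
    (b1.pow 2).inv₀ fun θ => pow_ne_zero _ (Complex.exp_ne_zero _)
  have i3 : Continuous (fun θ : ℝ => (Complex.exp ((θ : ℂ) * I) ^ 3)⁻¹) :=
    (b1.pow 3).inv₀ fun θ => pow_ne_zero _ (Complex.exp_ne_zero _)
  refine Continuous.div ?_ ?_ fun θ => mul_ne_zero (qp_ne hq ?_) (qp_ne hq ?_)
  · fun_prop
  · fun_prop
  · rw [norm_mul, isv_ne1, mul_one]; simpa using isv_lt hq ha 1
  · rw [norm_mul, norm_inv, isv_ne1, inv_one, mul_one]; exact ha

lemma isvF_cont {q u a : ℂ} (hq : ‖q‖ < 1) (hu0 : u ≠ 0) (ha : ‖a‖ < 1)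
    (hu1 : ‖u‖ ≤ 1) :
    Continuous fun θ : ℝ => isvF q u a (Complex.exp ((θ : ℂ) * I)) := by
  rw [continuous_iff_continuousAt]
  intro θ
  have h := (isvF_diff hq hu0 ha (Complex.exp ((θ : ℂ) * I)) (by rw [isv_ne1]; exact hu1)
    (by rw [isv_ne1])).continuousAt
  have b1 : Continuous (fun θ : ℝ => Complex.exp ((θ : ℂ) * I)) := by fun_prop
  exact ContinuousAt.comp (f := fun θ : ℝ => Complex.exp ((θ : ℂ) * I)) h b1.continuousAt

lemma qp_q0 (x : ℂ) : qp 0 x = 1 - x := by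
  have := qp_shift (q := 0) (by simp) x
  simpa [qp_zero] using this

lemma isvg_int {q u a : ℂ} (hq : ‖q‖ < 1) (hu : u ^ 2 = q) (ha : ‖a‖ < 1) :
    ∫ θ in (0:ℝ)..2 * Real.pi, isvg q a (Complex.exp ((θ : ℂ) * I)) = 0 := by
  by_cases hu0 : u = 0
  · have hq0 : q = 0 := by rw [← hu, hu0]; simp
    subst hq0
    have fold1 := isv_fold (isvg 0 a) (isvg_cont hq ha)
    have cont2 : Continuous fun θ : ℝ => isvg 0 a (Complex.exp ((θ : ℂ) * I))⁻¹ := by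
      have : Continuous fun θ : ℝ => isvg 0 a (Complex.exp (((-θ : ℝ) : ℂ) * I)) :=
        (isvg_cont hq ha).comp continuous_neg
      simpa only [ofReal_neg, neg_mul, Complex.exp_neg] using this
    have fold2 := isv_fold (fun z => isvg 0 a z⁻¹) cont2
    have : ∫ θ in (0:ℝ)..2 * Real.pi, isvg 0 a (Complex.exp ((θ : ℂ) * I)) =
        ∫ θ in (0:ℝ)..2 * Real.pi, isvg 0 a (Complex.exp ((θ : ℂ) * I))⁻¹ := by
      rw [fold1, fold2]
      apply intervalIntegral.integral_congr
      intro θ _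
      simp only [Complex.exp_neg, inv_inv]
      ring
    rw [this]
    have c0 : (∮ z in C(0, 1), (z ^ 2 - 1) / (1 - a * z)) = 0 := by
      apply DiffContOnCl.circleIntegral_eq_zero zero_le_one
      apply DifferentiableOn.diffContOnCl
      rw [closure_ball _ one_ne_zero]
      apply DifferentiableOn.div (by fun_prop) (by fun_prop)
      intro z hz
      apply isv_one_sub
      have : ‖z‖ ≤ 1 := by simpa using hz
      rw [norm_mul]
      calc ‖a‖ * ‖z‖ ≤ ‖a‖ * 1 := by gcongr
        _ < 1 := by simpa
    rw [circleIntegral] at c0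
    have c1 : I * ∫ θ in (0:ℝ)..2 * Real.pi, isvg 0 a (Complex.exp ((θ : ℂ) * I))⁻¹ = 0 := by
      rw [← intervalIntegral.integral_const_mul]
      refine Eq.trans ?_ c0
      apply intervalIntegral.integral_congr
      intro θ _
      have e : circleMap 0 1 θ = Complex.exp ((θ : ℂ) * I) := by simp [circleMap]
      simp only [deriv_circleMap, smul_eq_mul, e]
      have k1 : ‖a * Complex.exp ((θ : ℂ) * I)‖ < 1 := by rw [norm_mul, isv_ne1]; simpa
      have n1 := isv_one_sub k1
      have hz := Complex.exp_ne_zero ((θ : ℂ) * I)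
      generalize Complex.exp ((θ : ℂ) * I) = z at *
      simp only [isvg, qp_q0]
      rw [inv_inv]
      field_simp
      simp
      field_simp
    exact (mul_eq_zero.mp c1).resolve_left I_ne_zero
  · have hu1 : ‖u‖ ≤ 1 := by
      have : ‖u‖ ^ 2 < 1 := by rw [← norm_pow, hu]; exact hq
      nlinarith [norm_nonneg u]
    have h1 : ∀ θ : ℝ, isvg q a (Complex.exp ((θ : ℂ) * I)) =
        -u * isvF q u a (u * Complex.exp ((θ : ℂ) * I)) := fun θ =>
      isvF_g hq hu hu0 _ (Complex.exp_ne_zero _)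
    simp only [h1]
    rw [intervalIntegral.integral_const_mul, isv_mean _ u hu0 hu1
      (fun z hz1 hz2 => isvF_diff hq hu0 ha z hz1 hz2),
      isv_fold _ (isvF_cont hq hu0 ha hu1)]
    have h2 : ∀ θ : ℝ, isvF q u a (Complex.exp ((θ : ℂ) * I)) +
        isvF q u a (Complex.exp (-((θ : ℂ) * I))) = 0 := by
      intro θ
      rw [Complex.exp_neg, isvF_anti hq _ (Complex.exp_ne_zero _)]; ring
    simp [h2]

/-- the weight -/
noncomputable def isvw (q : ℂ) (θ : ℝ) : ℂ :=
  qp q (Complex.exp ((θ : ℂ) * I) ^ 2) * qp q (Complex.exp (-((θ : ℂ) * I)) ^ 2)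

lemma isvw_cont {q : ℂ} (hq : ‖q‖ < 1) : Continuous (isvw q) := by
  have D := (qp_differentiable hq).continuous
  unfold isvw
  fun_prop

lemma isv_I1_shift {q u a : ℂ} (hq : ‖q‖ < 1) (hu : u ^ 2 = q) (ha : ‖a‖ < 1) :
    ∫ θ in (0:ℝ)..Real.pi, isvw q θ / hh q θ (a * q) =
      ∫ θ in (0:ℝ)..Real.pi, isvw q θ / hh q θ a := by
  have h := isvg_int hq hu ha
  rw [isv_fold _ (isvg_cont hq ha)] at h
  have haq : ‖a * q‖ < 1 := by simpa using isv_lt hq ha 1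
  have cont : ∀ c : ℂ, ‖c‖ < 1 → Continuous (fun θ : ℝ => isvw q θ / hh q θ c) := fun c hc =>
    (isvw_cont hq).div (hh_cont hq c) fun θ => hh_ne hq hc θ
  rw [← sub_eq_zero, ← intervalIntegral.integral_sub ((cont _ haq).intervalIntegrable _ _)
    ((cont _ ha).intervalIntegrable _ _), ← mul_zero a, ← h,
    ← intervalIntegral.integral_const_mul]
  apply intervalIntegral.integral_congr
  intro θ _
  simp only
  have s := isvg_sum hq ha _ (isv_ne1 θ)
  rw [← Complex.exp_neg] at s
  rw [s]
  have e1 := hh_shift hq θ a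
  have n1 := hh_ne hq ha θ
  have n2 := hh_ne hq haq θ
  have m1 : 1 / hh q θ (a * q) = (1 - a * (Complex.exp ((θ : ℂ) * I)
      + Complex.exp (-((θ : ℂ) * I))) + a ^ 2) / hh q θ a := by
    rw [div_eq_div_iff n2 n1]; linear_combination e1
  rw [div_eq_mul_one_div (isvw q θ) (hh q θ (a * q)), m1, ← hh, ← isvw]
  field_simp
  ring

lemma isv_I1 {q u a : ℂ} (hq : ‖q‖ < 1) (hu : u ^ 2 = q) (ha : ‖a‖ < 1) :
    ∫ θ in (0:ℝ)..Real.pi, isvw q θ / hh q θ a = ∫ θ in (0:ℝ)..Real.pi, isvw q θ := by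
  have hn : ∀ n : ℕ, ∫ θ in (0:ℝ)..Real.pi, isvw q θ / hh q θ (a * q ^ n) =
      ∫ θ in (0:ℝ)..Real.pi, isvw q θ / hh q θ a := by
    intro n
    induction n with
    | zero => simp
    | succ n ih => rw [← ih, pow_succ, ← mul_assoc, isv_I1_shift hq hu (isv_lt hq ha n)]
  have hc : ContinuousAt (fun c => ∫ θ in (0:ℝ)..Real.pi, isvw q θ / hh q θ c) 0 :=
    ((isv_int_diff hq _ (isvw_cont hq)).differentiableAt
      (Metric.ball_mem_nhds _ one_pos)).continuousAt
  have ht : Tendsto (fun n : ℕ => a * q ^ n) atTop (𝓝 0) := by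
    simpa using (tendsto_pow_atTop_nhds_zero_of_norm_lt_one hq).const_mul a
  have := hc.tendsto.comp ht
  have h2 : Tendsto (fun _ : ℕ => ∫ θ in (0:ℝ)..Real.pi, isvw q θ / hh q θ a) atTop
      (𝓝 (∫ θ in (0:ℝ)..Real.pi, isvw q θ / hh q θ 0)) := by
    refine this.congr fun n => ?_
    exact hn n
  have := tendsto_nhds_unique h2 tendsto_const_nhds
  simpa [hh_zero] using this.symm


lemma isv_ml {x y : ℂ} (hx : ‖x‖ < 1) (hy : ‖y‖ < 1) : ‖x * y‖ < 1 := by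
  rw [norm_mul]
  nlinarith [norm_nonneg x, norm_nonneg y]

noncomputable def isvR (q a b c d : ℂ) : ℂ :=
  qp q (a * b * c * d) / (qp q (a * b) * qp q (a * c) * qp q (a * d) * qp q (b * c) * qp q (b * d)
    * qp q (c * d))

lemma isvR_eq {q a b c d : ℂ} (hq : ‖q‖ < 1) (ha : ‖a‖ < 1) (hb : ‖b‖ < 1) (hc : ‖c‖ < 1)
    (hd : ‖d‖ < 1) :
    d * isvR q a b (c * q) d - c * isvR q a b c (d * q)
      = (d - c) * (1 - c * d) * isvR q a b c d := by
  unfold isvR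
  have e1 : a * b * (c * q) * d = a * b * c * d * q := by ring
  have e2 : a * b * c * (d * q) = a * b * c * d * q := by ring
  have e3 : c * q * d = c * d * q := by ring
  rw [e1, e2, e3, ← mul_assoc a c q, ← mul_assoc a d q, ← mul_assoc b c q, ← mul_assoc b d q,
    ← mul_assoc c d q, qp_shift hq (a * b * c * d), qp_shift hq (a * c), qp_shift hq (a * d),
    qp_shift hq (b * c), qp_shift hq (b * d), qp_shift hq (c * d)]
  have nn : ∀ x : ℂ, ‖x‖ < 1 → qp q (x * q) ≠ 0 := fun x hx => qp_ne hq (isv_ml hx hq)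
  have n0 := qp_ne hq (isv_ml ha hb)
  have n1 := nn _ (isv_ml ha hc)
  have n2 := nn _ (isv_ml ha hd)
  have n3 := nn _ (isv_ml hb hc)
  have n4 := nn _ (isv_ml hb hd)
  have n5 := nn _ (isv_ml hc hd)
  have m1 := isv_one_sub (isv_ml ha hc)
  have m2 := isv_one_sub (isv_ml ha hd)
  have m3 := isv_one_sub (isv_ml hb hc)
  have m4 := isv_one_sub (isv_ml hb hd)
  have m5 := isv_one_sub (isv_ml hc hd)
  have m1' : 1 - c * a ≠ 0 := by rwa [mul_comm]
  have m2' : 1 - d * a ≠ 0 := by rwa [mul_comm]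
  have m3' : 1 - c * b ≠ 0 := by rwa [mul_comm]
  have m4' : 1 - d * b ≠ 0 := by rwa [mul_comm]
  have m5' : 1 - d * c ≠ 0 := by rwa [mul_comm]
  generalize qp q (a * b) = A0 at *
  generalize qp q (a * c * q) = A1 at *
  generalize qp q (a * d * q) = A2 at *
  generalize qp q (b * c * q) = A3 at *
  generalize qp q (b * d * q) = A4 at *
  generalize qp q (c * d * q) = A5 at *
  generalize qp q (a * b * c * d * q) = A6 at *
  field_simp
  ring

lemma isvR_diff {q a b d : ℂ} (hq : ‖q‖ < 1) (ha : ‖a‖ < 1) (hb : ‖b‖ < 1) (hd : ‖d‖ < 1) :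
    DifferentiableOn ℂ (fun c => isvR q a b c d) (Metric.ball 0 1) := by
  have D := qp_differentiable hq
  unfold isvR
  apply DifferentiableOn.div (by fun_prop) (by fun_prop)
  intro c hc
  have hc : ‖c‖ < 1 := by simpa using hc
  have nn : ∀ x y : ℂ, ‖x‖ < 1 → ‖y‖ < 1 → qp q (x * y) ≠ 0 := fun x y hx hy =>
    qp_ne hq (isv_ml hx hy)
  simp [nn, ha, hb, hc, hd]

lemma isvR_symm (q a b c d : ℂ) : isvR q a b c d = isvR q a b d c := by
  unfold isvR
  rw [mul_right_comm (a * b) c d, mul_comm c d]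
  congr 1
  ring

lemma isv_step {q a b C : ℂ} (hq : ‖q‖ < 1) (ha : ‖a‖ < 1) (hb : ‖b‖ < 1)
    (V : ℝ → ℂ) (hV : Continuous V)
    (h : ∀ c, ‖c‖ < 1 → ∫ θ in (0:ℝ)..Real.pi, V θ / hh q θ c = C * isvR q a b c 0) :
    ∀ c d, ‖c‖ < 1 → ‖d‖ < 1 →
      ∫ θ in (0:ℝ)..Real.pi, V θ / (hh q θ c * hh q θ d) = C * isvR q a b c d := by
  have key := isv_unique hq (fun c d => (∫ θ in (0:ℝ)..Real.pi, V θ / (hh q θ c * hh q θ d))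
    - C * isvR q a b c d) ?_ ?_ ?_ ?_
  · intro c d hc hd
    exact sub_eq_zero.mp (key c d hc hd)
  · intro d hd
    refine DifferentiableOn.sub ?_ ((isvR_diff hq ha hb hd).const_mul C)
    have := isv_int_diff hq (fun θ => V θ / hh q θ d)
      (hV.div (hh_cont hq d) fun θ => hh_ne hq hd θ)
    refine this.congr fun c _ => ?_
    simp only [div_div, mul_comm]
  · intro d hd
    simp only [hh_zero, one_mul]
    rw [h d hd, isvR_symm, sub_self]
  · intro c hc
    simp only [hh_zero, mul_one]
    rw [h c hc, sub_self]
  · intro c d hc hd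
    have h1 := isv_contig hq V hV c d hc hd
    have h2 := isvR_eq hq ha hb hc hd
    linear_combination h1 - C * h2

lemma isv_w_eq {q u : ℂ} (hq : ‖q‖ < 1) (hu : u ^ 2 = q) (θ : ℝ) :
    hh q θ 1 * hh q θ (-1) * hh q θ u * hh q θ (-u) = isvw q θ := by
  have key : ∀ z : ℂ, qp q z * qp q (-z) * qp q (u * z) * qp q (-(u * z)) = qp q (z ^ 2) := by
    intro z
    rw [qp_neg_mul hq, mul_assoc, qp_neg_mul hq, mul_pow, hu, mul_comm q, qp_even_odd hq]
  unfold hh isvw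
  rw [← key, ← key]
  simp only [one_mul, neg_mul]
  ring

lemma isv_AW0 {q u : ℂ} (hq : ‖q‖ < 1) (hu : u ^ 2 = q) (a b c d : ℂ)
    (ha : ‖a‖ < 1) (hb : ‖b‖ < 1) (hc : ‖c‖ < 1) (hd : ‖d‖ < 1) :
    ∫ θ in (0:ℝ)..Real.pi, (isvw q θ / (hh q θ a * hh q θ b)) / (hh q θ c * hh q θ d) =
      (∫ θ in (0:ℝ)..Real.pi, isvw q θ) * isvR q a b c d := by
  have z0 : ‖(0 : ℂ)‖ < 1 := by simp
  have hw := isvw_cont hq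
  have s1 := isv_step (C := ∫ θ in (0:ℝ)..Real.pi, isvw q θ) hq z0 z0 (isvw q) hw (by
    intro c hc
    rw [isv_I1 hq hu hc]; simp [isvR, qp_zero])
  have s2 : ∀ b, ‖b‖ < 1 → _ := fun b hb =>
    isv_step (C := ∫ θ in (0:ℝ)..Real.pi, isvw q θ) hq z0 hb
    (fun θ => isvw q θ / hh q θ b) (hw.div (hh_cont hq b) fun θ => hh_ne hq hb θ) (by
    intro c hc
    have := s1 b c hb hc
    simp only [div_div]
    rw [this]; simp [isvR, qp_zero])
  refine isv_step hq ha hb (fun θ => isvw q θ / (hh q θ a * hh q θ b)) (hw.div ((hh_cont hq a).mul (hh_cont hq b)) fun θ =>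
    mul_ne_zero (hh_ne hq ha θ) (hh_ne hq hb θ)) ?_ c d hc hd
  intro c hc
  have := s2 a ha b c hb hc
  simp only [div_div] at this ⊢
  simp only [mul_assoc]
  rw [this]; simp [isvR, qp_zero]

lemma isv_I0 {q u : ℂ} (hq : ‖q‖ < 1) (hu : u ^ 2 = q) :
    (∫ θ in (0:ℝ)..Real.pi, isvw q θ) = 2 * Real.pi / qp q q := by
  have hu1 : ‖u‖ < 1 := by
    have : ‖u‖ ^ 2 < 1 := by rw [← norm_pow, hu]; exact hq
    nlinarith [norm_nonneg u]
  have hq' : ‖-q‖ < 1 := by rwa [norm_neg]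
  have hu' : ‖-u‖ < 1 := by rwa [norm_neg]
  have h := isv_AW0 hq hu q (-q) u (-u) hq hq' hu1 hu'
  have hl : ∫ θ in (0:ℝ)..Real.pi, (isvw q θ / (hh q θ q * hh q θ (-q))) /
      (hh q θ u * hh q θ (-u)) = 2 * Real.pi := by
    have e : ∀ θ : ℝ, (isvw q θ / (hh q θ q * hh q θ (-q))) / (hh q θ u * hh q θ (-u)) =
        ((4 * Real.sin θ ^ 2 : ℝ) : ℂ) := by
      intro θ
      rw [← isv_w_eq hq hu, hh_shift hq θ 1, hh_shift hq θ (-1), one_mul, neg_one_mul]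
      have n1 := hh_ne hq hq θ
      have n2 := hh_ne hq hq' θ
      have n3 := hh_ne hq hu1 θ
      have n4 := hh_ne hq hu' θ
      have e1 : Complex.exp ((θ : ℂ) * I) + Complex.exp (-((θ : ℂ) * I)) = 2 * Complex.cos θ := by
        rw [Complex.cos, neg_mul]; ring
      rw [e1]
      field_simp
      push_cast
      have := Complex.sin_sq_add_cos_sq θ
      linear_combination -4 * this
    simp only [e]
    rw [intervalIntegral.integral_ofReal, intervalIntegral.integral_const_mul, integral_sin_sq]
    simp
    ring
  rw [hl] at h
  have hR : isvR q q (-q) u (-u) = qp q q := by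
    unfold isvR
    have S : qp q u * qp q (-u) * qp q (-q) = 1 := by
      have h1 := qp_neg_mul hq u
      have h2 := qp_neg_mul hq q
      have h3 := qp_even_odd hq q
      have n := qp_ne hq hq
      rw [hu] at h1
      rw [← pow_two] at h3
      rw [h1]
      apply mul_right_cancel₀ n
      linear_combination qp (q ^ 2) q * h2 + h3
    have a1 := qp_shift hq u
    have a2 := qp_shift hq (-u)
    have a3 := qp_shift hq (-q)
    have a4 := qp_shift hq q
    have a5 := qp_shift hq (q * q)
    have b1 : q * -q * u * -u = q * q * q := by rw [← hu]; ring
    have b2 : u * -u = -q := by rw [← hu]; ring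
    have b3 : -q * u = -u * q := by ring
    have b4 : -q * -u = u * q := by ring
    have b5 : q * -q = -q * q := by ring
    have b6 : q * -u = -u * q := by ring
    have b7 : q * u = u * q := by ring
    rw [b1, b2, b3, b4, b5, b6, b7, a3, a4, a5]
    rw [a1, a2, a3] at S
    have nq := isv_one_sub hq
    have nq' := isv_one_sub hq'
    have n1 := qp_ne hq (isv_ml hu1 hq)
    have n2 := qp_ne hq (isv_ml hu' hq)
    have n3 := qp_ne hq (isv_ml hq' hq)
    generalize qp q (u * q) = s at *
    generalize qp q (-u * q) = t at *
    generalize qp q (-q * q) = m at *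
    generalize qp q (q * q * q) = X at *
    have S' : (1 - q) * (1 + q) * (s * t * m) = 1 := by
      linear_combination S + (1 + q) * s * t * m * hu
    rw [div_eq_iff (by
      rw [sub_neg_eq_add] at nq'
      simp [n1, n2, n3, nq'])]
    have : (1 - q * q) = (1 - q) * (1 + q) := by ring
    rw [this]
    linear_combination (-X * ((1 - q) * (1 + q) * (s * t * m) + 1)) * S'
  rw [hR] at h
  rw [eq_div_iff (qp_ne hq hq), ← h]

lemma isv_AW {q u : ℂ} (hq : ‖q‖ < 1) (hu : u ^ 2 = q) (a b c d : ℂ)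
    (ha : ‖a‖ < 1) (hb : ‖b‖ < 1) (hc : ‖c‖ < 1) (hd : ‖d‖ < 1) :
    ∫ θ in (0:ℝ)..Real.pi, (isvw q θ / (hh q θ a * hh q θ b)) / (hh q θ c * hh q θ d) =
      2 * Real.pi / qp q q * isvR q a b c d := by
  rw [isv_AW0 hq hu a b c d ha hb hc hd, isv_I0 hq hu]


/-- the terms of the series -/
noncomputable def isvt (q a b c d f : ℂ) (k : ℕ) : ℂ :=
  (qpn q (a * b) k * qpn q (a * c) k * qpn q (b * c) k / qpn q q k) *
    (qp q (a * b * c * d * q ^ k) * qp q (a * b * c * f * q ^ k)) * (d * f) ^ k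

lemma isvt_bound {q a b c : ℂ} (hq : ‖q‖ < 1) (ha : ‖a‖ < 1) (hb : ‖b‖ < 1) (hc : ‖c‖ < 1) :
    ∃ M : ℝ, ∀ k d f, ‖d‖ < 1 → ‖f‖ < 1 → ‖isvt q a b c d f k‖ ≤ M * ‖f‖ ^ k := by
  have ht := (((qpn_tendsto hq (a * b)).mul (qpn_tendsto hq (a * c))).mul
    (qpn_tendsto hq (b * c))).div (qpn_tendsto hq q) (qp_ne hq hq)
  obtain ⟨M1, hM1⟩ := ht.norm.bddAbove_range
  obtain ⟨M2, hM2⟩ := (isCompact_closedBall (0 : ℂ) 1).exists_bound_of_continuousOn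
    (qp_differentiable hq).continuous.continuousOn
  refine ⟨M1 * (M2 * M2), fun k d f hd hf => ?_⟩
  have h1 : ‖qpn q (a * b) k * qpn q (a * c) k * qpn q (b * c) k / qpn q q k‖ ≤ M1 :=
    hM1 ⟨k, rfl⟩
  have habc := isv_ml (isv_ml ha hb) hc
  have h2 := hM2 (a * b * c * d * q ^ k) (by
    simpa using (isv_lt hq (isv_ml habc hd) k).le)
  have h3 := hM2 (a * b * c * f * q ^ k) (by
    simpa using (isv_lt hq (isv_ml habc hf) k).le)
  have p1 : 0 ≤ M1 := (norm_nonneg _).trans h1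
  have p2 : 0 ≤ M2 := (norm_nonneg _).trans h2
  unfold isvt
  rw [norm_mul, norm_mul _ (qp q _ * qp q _), norm_mul (qp q _), norm_pow, norm_mul d]
  have h4 : (‖d‖ * ‖f‖) ^ k ≤ ‖f‖ ^ k := by
    gcongr
    nlinarith [norm_nonneg d, norm_nonneg f]
  gcongr

lemma isvt_summable {q a b c : ℂ} (hq : ‖q‖ < 1) (ha : ‖a‖ < 1) (hb : ‖b‖ < 1) (hc : ‖c‖ < 1)
    {d f : ℂ} (hd : ‖d‖ < 1) (hf : ‖f‖ < 1) : Summable (isvt q a b c d f) := by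
  obtain ⟨M, hM⟩ := isvt_bound hq ha hb hc
  exact Summable.of_norm_bounded
    ((summable_geometric_of_lt_one (norm_nonneg _) hf).mul_left M) fun k => hM k d f hd hf

lemma isvt_zero (q a b c d : ℂ) : ∑' k, isvt q a b c d 0 k = qp q (a * b * c * d) := by
  rw [tsum_eq_single 0]
  · simp [isvt, qpn, qp_zero]
  · intro k hk
    simp [isvt, hk]

lemma isvt_symm (q a b c d f : ℂ) : isvt q a b c d f = isvt q a b c f d := by
  funext k
  unfold isvt
  rw [mul_comm d f]
  ring

lemma isvN_eq {q a b c : ℂ} (hq : ‖q‖ < 1) (ha : ‖a‖ < 1) (hb : ‖b‖ < 1) (hc : ‖c‖ < 1)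
    {d f : ℂ} (hd : ‖d‖ < 1) (hf : ‖f‖ < 1) :
    f * ((1 - a * d) * (1 - b * d) * (1 - c * d)) * (∑' k, isvt q a b c (d * q) f k)
      - d * ((1 - a * f) * (1 - b * f) * (1 - c * f)) * (∑' k, isvt q a b c d (f * q) k)
      = (f - d) * (1 - d * f) * ∑' k, isvt q a b c d f k := by
  have hdq := isv_ml hd hq
  have hfq := isv_ml hf hq
  have S1 := isvt_summable hq ha hb hc hdq hf
  have S2 := isvt_summable hq ha hb hc hd hfq
  have S3 := isvt_summable hq ha hb hc hd hf
  have SU : Summable fun k : ℕ => (f - d) * (1 - q ^ k) * isvt q a b c d f k := by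
    have hn := S3.norm
    refine Summable.of_norm_bounded (hn.mul_left (‖f - d‖ * 2)) fun k => ?_
    rw [norm_mul, norm_mul]
    gcongr
    calc ‖1 - q ^ k‖ ≤ ‖(1 : ℂ)‖ + ‖q ^ k‖ := norm_sub_le _ _
      _ ≤ 1 + 1 := by
        rw [norm_one, norm_pow]; gcongr; exact pow_le_one₀ (norm_nonneg _) hq.le
      _ = 2 := by norm_num
  have hU := SU.tsum_eq_zero_add
  simp only [pow_zero, sub_self, mul_zero, zero_mul, zero_add] at hU
  have SU1 : Summable fun k : ℕ => (f - d) * (1 - q ^ (k + 1)) * isvt q a b c d f (k + 1) :=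
    (summable_nat_add_iff 1).mpr SU
  have term : ∀ k, f * ((1 - a * d) * (1 - b * d) * (1 - c * d)) * isvt q a b c (d * q) f k
      - d * ((1 - a * f) * (1 - b * f) * (1 - c * f)) * isvt q a b c d (f * q) k
      - (f - d) * (1 - d * f) * isvt q a b c d f k
      = (f - d) * (1 - q ^ (k + 1)) * isvt q a b c d f (k + 1)
        - (f - d) * (1 - q ^ k) * isvt q a b c d f k := by
    intro k
    unfold isvt
    have e1 : a * b * c * (d * q) * q ^ k = a * b * c * d * q ^ k * q := by ring
    have e2 : a * b * c * (f * q) * q ^ k = a * b * c * f * q ^ k * q := by ring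
    have e3 : a * b * c * d * q ^ (k + 1) = a * b * c * d * q ^ k * q := by ring
    have e4 : a * b * c * f * q ^ (k + 1) = a * b * c * f * q ^ k * q := by ring
    rw [e1, e2, e3, e4, qp_shift hq (a * b * c * d * q ^ k), qp_shift hq (a * b * c * f * q ^ k)]
    simp only [qpn_succ]
    have n1 := qpn_ne hq hq k
    have n2 := isv_one_sub (isv_lt hq hq k)
    have al : (1 - q ^ (k + 1)) * (qpn q (a * b) k * (1 - a * b * q ^ k) *
        (qpn q (a * c) k * (1 - a * c * q ^ k)) * (qpn q (b * c) k * (1 - b * c * q ^ k)) /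
        (qpn q q k * (1 - q * q ^ k))) = qpn q (a * b) k * qpn q (a * c) k * qpn q (b * c) k /
        qpn q q k * ((1 - a * b * q ^ k) * (1 - a * c * q ^ k) * (1 - b * c * q ^ k)) := by
      rw [pow_succ' q k]
      field_simp
    have al2 : ∀ x y : ℂ, (f - d) * (1 - q ^ (k + 1)) * ((qpn q (a * b) k * (1 - a * b * q ^ k) *
        (qpn q (a * c) k * (1 - a * c * q ^ k)) * (qpn q (b * c) k * (1 - b * c * q ^ k)) /
        (qpn q q k * (1 - q * q ^ k))) * x * y) = (f - d) * (qpn q (a * b) k * qpn q (a * c) k *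
        qpn q (b * c) k /
        qpn q q k * ((1 - a * b * q ^ k) * (1 - a * c * q ^ k) * (1 - b * c * q ^ k))) * x * y := by
      intro x y
      rw [← al]; ring
    rw [al2]
    generalize qpn q (a * b) k * qpn q (a * c) k * qpn q (b * c) k / qpn q q k = α
    generalize qp q (a * b * c * d * q ^ k * q) = X
    generalize qp q (a * b * c * f * q ^ k * q) = Z
    rw [pow_succ (d * f) k, show d * q * f = q * (d * f) by ring,
      show d * (f * q) = q * (d * f) by ring, mul_pow q (d * f) k]
    generalize (d * f) ^ k = Y
    generalize q ^ k = Q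
    ring
  have T := tsum_congr (L := SummationFilter.unconditional ℕ) term
  rw [(SU1.tsum_sub SU), ← hU, sub_self,
    ((S1.mul_left _).sub (S2.mul_left _)).tsum_sub (S3.mul_left _),
    (S1.mul_left _).tsum_sub (S2.mul_left _), tsum_mul_left, tsum_mul_left, tsum_mul_left] at T
  exact sub_eq_zero.mp T

noncomputable def isvQ (q a b c d f : ℂ) : ℂ :=
  (∑' k, isvt q a b c d f k) / (qp q (a * b) * qp q (a * c) * qp q (a * d) * qp q (a * f) *
            qp q (b * c) * qp q (b * d) * qp q (b * f) * qp q (c * d) * qp q (c * f))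

lemma isvQ_symm (q a b c d f : ℂ) : isvQ q a b c d f = isvQ q a b c f d := by
  unfold isvQ
  rw [isvt_symm]
  congr 1
  ring

lemma isvQ_diff {q a b c f : ℂ} (hq : ‖q‖ < 1) (ha : ‖a‖ < 1) (hb : ‖b‖ < 1) (hc : ‖c‖ < 1)
    (hf : ‖f‖ < 1) :
    DifferentiableOn ℂ (fun d => isvQ q a b c d f) (Metric.ball 0 1) := by
  have D := qp_differentiable hq
  unfold isvQ
  apply DifferentiableOn.div
  · obtain ⟨M, hM⟩ := isvt_bound hq ha hb hc
    refine differentiableOn_tsum_of_summable_norm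
      ((summable_geometric_of_lt_one (norm_nonneg _) hf).mul_left M) (fun k => ?_)
      Metric.isOpen_ball fun k d hd => hM k d f (by simpa using hd) hf
    unfold isvt
    fun_prop
  · fun_prop
  intro d hd
  have hd : ‖d‖ < 1 := by simpa using hd
  have nn : ∀ x y : ℂ, ‖x‖ < 1 → ‖y‖ < 1 → qp q (x * y) ≠ 0 := fun x y hx hy =>
    qp_ne hq (isv_ml hx hy)
  simp [nn, ha, hb, hc, hd, hf]

lemma isvQ_zero (q a b c d : ℂ) : isvQ q a b c d 0 = isvR q a b c d := by
  unfold isvQ isvR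
  rw [isvt_zero]
  simp only [mul_zero, qp_zero, mul_one]

lemma isvQ_eq {q a b c d f : ℂ} (hq : ‖q‖ < 1) (ha : ‖a‖ < 1) (hb : ‖b‖ < 1) (hc : ‖c‖ < 1)
    (hd : ‖d‖ < 1) (hf : ‖f‖ < 1) :
    f * isvQ q a b c (d * q) f - d * isvQ q a b c d (f * q)
      = (f - d) * (1 - d * f) * isvQ q a b c d f := by
  have key := isvN_eq hq ha hb hc hd hf
  unfold isvQ
  generalize (∑' k, isvt q a b c (d * q) f k) = N1 at *
  generalize (∑' k, isvt q a b c d (f * q) k) = N2 at *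
  generalize (∑' k, isvt q a b c d f k) = N3 at *
  have nn : ∀ x y : ℂ, ‖x‖ < 1 → ‖y‖ < 1 → qp q (x * y * q) ≠ 0 := fun x y hx hy =>
    qp_ne hq (isv_ml (isv_ml hx hy) hq)
  have n1 := qp_ne hq (isv_ml ha hb)
  have n2 := qp_ne hq (isv_ml ha hc)
  have n3 := qp_ne hq (isv_ml hb hc)
  have p1 := nn _ _ ha hd
  have p2 := nn _ _ hb hd
  have p3 := nn _ _ hc hd
  have p4 := nn _ _ ha hf
  have p5 := nn _ _ hb hf
  have p6 := nn _ _ hc hf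
  have m1 := isv_one_sub (isv_ml ha hd)
  have m2 := isv_one_sub (isv_ml hb hd)
  have m3 := isv_one_sub (isv_ml hc hd)
  have m4 := isv_one_sub (isv_ml ha hf)
  have m5 := isv_one_sub (isv_ml hb hf)
  have m6 := isv_one_sub (isv_ml hc hf)
  rw [← mul_assoc a d q, ← mul_assoc b d q, ← mul_assoc c d q, ← mul_assoc a f q,
    ← mul_assoc b f q, ← mul_assoc c f q,
    qp_shift hq (a * d), qp_shift hq (b * d), qp_shift hq (c * d), qp_shift hq (a * f),
    qp_shift hq (b * f), qp_shift hq (c * f)]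
  generalize qp q (a * b) = A1 at *
  generalize qp q (a * c) = A2 at *
  generalize qp q (b * c) = A3 at *
  generalize qp q (a * d * q) = B1 at *
  generalize qp q (b * d * q) = B2 at *
  generalize qp q (c * d * q) = B3 at *
  generalize qp q (a * f * q) = B4 at *
  generalize qp q (b * f * q) = B5 at *
  generalize qp q (c * f * q) = B6 at *
  generalize 1 - a * d = x1 at *
  generalize 1 - b * d = x2 at *
  generalize 1 - c * d = x3 at *
  generalize 1 - a * f = x4 at *
  generalize 1 - b * f = x5 at *
  generalize 1 - c * f = x6 at *
  rw [← mul_div_assoc ((f - d) * (1 - d * f)), ← key]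
  field_simp

lemma isv_main {q u a b c d f : ℂ} (hq : ‖q‖ < 1) (hu : u ^ 2 = q) (ha : ‖a‖ < 1) (hb : ‖b‖ < 1)
    (hc : ‖c‖ < 1) (hd : ‖d‖ < 1) (hf : ‖f‖ < 1) :
    ∫ θ in (0:ℝ)..Real.pi, (isvw q θ / (hh q θ a * hh q θ b) / hh q θ c) /
        (hh q θ d * hh q θ f) = 2 * Real.pi / qp q q * isvQ q a b c d f := by
  have hV : Continuous (fun θ => isvw q θ / (hh q θ a * hh q θ b) / hh q θ c) :=
    ((isvw_cont hq).div ((hh_cont hq a).mul (hh_cont hq b)) fun θ =>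
      mul_ne_zero (hh_ne hq ha θ) (hh_ne hq hb θ)).div (hh_cont hq c) fun θ => hh_ne hq hc θ
  have h : ∀ d, ‖d‖ < 1 → ∫ θ in (0:ℝ)..Real.pi,
      (isvw q θ / (hh q θ a * hh q θ b) / hh q θ c) / hh q θ d =
        2 * Real.pi / qp q q * isvQ q a b c d 0 := by
    intro d hd
    rw [isvQ_zero, ← isv_AW hq hu a b c d ha hb hc hd]
    simp only [div_div, mul_assoc]
  have key := isv_unique hq (fun d f => (∫ θ in (0:ℝ)..Real.pi,
    (isvw q θ / (hh q θ a * hh q θ b) / hh q θ c) / (hh q θ d * hh q θ f))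
    - 2 * Real.pi / qp q q * isvQ q a b c d f) ?_ ?_ ?_ ?_
  · exact sub_eq_zero.mp (key d f hd hf)
  · intro f hf
    refine DifferentiableOn.sub ?_ ((isvQ_diff hq ha hb hc hf).const_mul _)
    have := isv_int_diff hq (fun θ => (isvw q θ / (hh q θ a * hh q θ b) / hh q θ c) / hh q θ f)
      (hV.div (hh_cont hq f) fun θ => hh_ne hq hf θ)
    refine this.congr fun d _ => ?_
    apply intervalIntegral.integral_congr
    intro θ _
    simp only
    rw [div_div _ (hh q θ f), mul_comm (hh q θ f)]
  · intro f hf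
    simp only [hh_zero, one_mul]
    rw [h f hf, isvQ_symm, sub_self]
  · intro d hd
    simp only [hh_zero, mul_one]
    rw [h d hd, sub_self]
  · intro d f hd hf
    have h1 := isv_contig hq _ hV d f hd hf
    have h2 := isvQ_eq hq ha hb hc hd hf
    linear_combination h1 - 2 * Real.pi / qp q q * h2


/-- The Ismail–Stanton–Viennot integral. -/
theorem ismail_stanton_viennot_integral (q u a b c d f : ℂ) (hq : ‖q‖ < 1) (hu : u ^ 2 = q)
    (ha : ‖a‖ < 1) (hb : ‖b‖ < 1) (hc : ‖c‖ < 1) (hd : ‖d‖ < 1) (hf : ‖f‖ < 1) :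
    ∫ θ in (0:ℝ)..Real.pi,
      (hh q θ 1 * hh q θ (-1) * hh q θ u * hh q θ (-u)) /
        (hh q θ a * hh q θ b * hh q θ c * hh q θ d * hh q θ f)
      = 2 * (Real.pi : ℂ) * (qp q (a * b * c * d) * qp q (a * b * c * f)) /
          (qp q q * qp q (a * b) * qp q (a * c) * qp q (a * d) * qp q (a * f) *
            qp q (b * c) * qp q (b * d) * qp q (b * f) * qp q (c * d) * qp q (c * f)) *
        ∑' k : ℕ, (qpn q (a * b) k * qpn q (a * c) k * qpn q (b * c) k) /
            (qpn q q k * qpn q (a * b * c * d) k * qpn q (a * b * c * f) k) * (d * f) ^ k := by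
  have hm := isv_main hq hu ha hb hc hd hf
  have habc := isv_ml (isv_ml ha hb) hc
  have e1 : ∀ θ : ℝ, (hh q θ 1 * hh q θ (-1) * hh q θ u * hh q θ (-u)) /
        (hh q θ a * hh q θ b * hh q θ c * hh q θ d * hh q θ f) =
      (isvw q θ / (hh q θ a * hh q θ b) / hh q θ c) / (hh q θ d * hh q θ f) := by
    intro θ
    rw [isv_w_eq hq hu, div_div, div_div]; simp only [mul_assoc]
  simp only [e1]
  rw [hm]
  have e2 : qp q (a * b * c * d) * qp q (a * b * c * f) *
      ∑' k : ℕ, (qpn q (a * b) k * qpn q (a * c) k * qpn q (b * c) k) /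
            (qpn q q k * qpn q (a * b * c * d) k * qpn q (a * b * c * f) k) * (d * f) ^ k =
      ∑' k, isvt q a b c d f k := by
    rw [← tsum_mul_left]
    apply tsum_congr
    intro k
    rw [qp_split hq (a * b * c * d) k, qp_split hq (a * b * c * f) k, isvt]
    have n1 := qpn_ne hq (isv_ml habc hd) k
    have n2 := qpn_ne hq (isv_ml habc hf) k
    have n3 := qpn_ne hq hq k
    generalize qpn q (a * b * c * d) k = A at *
    generalize qpn q (a * b * c * f) k = B at *
    field_simp
  rw [isvQ, ← e2]
  simp only [div_eq_mul_inv, mul_inv]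
  ring
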